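/- Let n be a positive integer. Then δ(m) < δ(n) for every positive integer m < n if and only if either n = 1 or n is a prime number. -/

import Mathlib

/-- `staircaseDelta n` is the minimum of `r + s` over all pairs of positive
integers `(r, s)` with `r ≤ s` and `r * s = n`. -/
noncomputable def staircaseDelta (n : ℕ) : ℕ :=
  sInf {w : ℕ | ∃ r s : ℕ, 0 < r ∧ r ≤ s ∧ r * s = n ∧ w = r + s}

/-!
Always `δ(m) ≤ m + 1`, with equality at primes, so primes are strict records. A composite `n` has
two factors that are at least `2`, which forces `δ(n) ≤ n / 2 + 2`. Bertrand's postulate supplies a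
prime `p` with `n / 2 < p < n`, and `δ(p) = p + 1` already reaches that bound.
-/

theorem staircaseDelta_mul_le_add {r s : ℕ} (hr : 0 < r) (hs : 0 < s) :
    staircaseDelta (r * s) ≤ r + s := by
  rcases le_total r s with hrs | hsr
  · exact Nat.sInf_le ⟨r, s, hr, hrs, rfl, rfl⟩
  · exact Nat.sInf_le ⟨s, r, hs, hsr, mul_comm s r, add_comm r s⟩

theorem exists_mul_eq_and_staircaseDelta_eq_add {n : ℕ} (hn : 0 < n) :
    ∃ r s : ℕ, r * s = n ∧ staircaseDelta n = r + s := by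
  obtain ⟨r, s, -, -, hmul, hadd⟩ := Nat.sInf_mem
    (s := {w : ℕ | ∃ r s : ℕ, 0 < r ∧ r ≤ s ∧ r * s = n ∧ w = r + s})
    ⟨1 + n, 1, n, one_pos, hn, one_mul n, rfl⟩
  exact ⟨r, s, hmul, hadd⟩

theorem staircaseDelta_le_add_one {n : ℕ} (hn : 0 < n) : staircaseDelta n ≤ n + 1 := by
  simpa only [mul_one] using staircaseDelta_mul_le_add hn one_pos

theorem staircaseDelta_of_prime {p : ℕ} (hp : p.Prime) : staircaseDelta p = p + 1 := by
  obtain ⟨r, s, rfl, hadd⟩ := exists_mul_eq_and_staircaseDelta_eq_add hp.pos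
  rcases Nat.prime_mul_iff.1 hp with ⟨-, rfl⟩ | ⟨-, rfl⟩
  · rw [hadd, mul_one]
  · rw [hadd, one_mul, add_comm]

theorem staircaseDelta_le_half_add_two {n : ℕ} (hn : 2 ≤ n) (hnp : ¬ n.Prime) :
    staircaseDelta n ≤ n / 2 + 2 := by
  obtain ⟨r, ⟨s, rfl⟩, hr, hrn⟩ := Nat.exists_dvd_of_not_prime2 hn hnp
  have hs : 2 ≤ s := (Nat.lt_mul_iff_one_lt_right (by omega)).1 hrn
  have hδ : staircaseDelta (r * s) ≤ r + s := staircaseDelta_mul_le_add (by omega) (by omega)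
  -- This is `0 ≤ (r - 2) * (s - 2)`.
  have hadd : 2 * (r + s) ≤ r * s + 4 := by nlinarith
  omega

theorem exists_prime_half_lt_and_lt {n : ℕ} (hn : 2 ≤ n) (hnp : ¬ n.Prime) :
    ∃ p : ℕ, p.Prime ∧ n / 2 < p ∧ p < n := by
  obtain ⟨p, hp, hlt, hle⟩ := Nat.exists_prime_lt_and_le_two_mul (n / 2) (by omega)
  have hpn : p ≠ n := fun h => hnp (h ▸ hp)
  exact ⟨p, hp, hlt, by omega⟩

/-- For a positive integer `n`, `δ(m) < δ(n)` for every positive `m < n` iff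
`n = 1` or `n` is prime. -/
theorem stmt10 (n : ℕ) (hn : 0 < n) :
    (∀ m : ℕ, 0 < m → m < n → staircaseDelta m < staircaseDelta n) ↔
      n = 1 ∨ Nat.Prime n := by
  constructor
  · intro hrecord
    by_contra! ⟨hn1, hnp⟩
    have hn2 : 2 ≤ n := by omega
    obtain ⟨p, hp, hhalf, hpn⟩ := exists_prime_half_lt_and_lt hn2 hnp
    have hlt : p + 1 < staircaseDelta n := staircaseDelta_of_prime hp ▸ hrecord p hp.pos hpn
    have hle : staircaseDelta n ≤ n / 2 + 2 := staircaseDelta_le_half_add_two hn2 hnp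
    omega
  · rintro (rfl | hp) m hm hmn
    · omega
    · calc
        staircaseDelta m ≤ m + 1 := staircaseDelta_le_add_one hm
        _ < n + 1 := by omega
        _ = staircaseDelta n := (staircaseDelta_of_prime hp).symm
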